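/- arXiv:math/0702490 — 8 statements merged into one kernel-verified Lean document; each statement's English description precedes it below -/
import Mathlib

section
/- The element ρ = Σ_{u∈G} δ_e ⊗ u of the algebra A is a two-sided integral element: for every h ∈ A one has ρ·h = ε(h)·ρ and h·ρ = ε(h)·ρ. -/
open scoped Classical

/-- The product of the algebra A (with basis δ_s ⊗ u, s ∈ M, u ∈ G), extended
bilinearly from
(δ_s ⊗ u)(δ_t ⊗ v) = δ_{t,s◁u} δ_{s◁τ(a,b)} ⊗ τ(a,b)⁻¹ u v,
where a = ⟨δ_s ⊗ u⟩, b = ⟨δ_t ⊗ v⟩. -/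
noncomputable def mulA {k : Type*} [Field k] {X : Type*} [Group X]
    (G : Subgroup X) (M : Set X)
    (tau : ↥M → ↥M → ↥G) (lho : ↥M → ↥G → ↥M) (br : ↥M → ↥G → ↥M)
    (f g : (↥M × ↥G) →₀ k) : (↥M × ↥G) →₀ k :=
  f.sum fun p c => g.sum fun q d =>
    if q.1 = lho p.1 p.2 then
      Finsupp.single
        (lho p.1 (tau (br p.1 p.2) (br q.1 q.2)),
          (tau (br p.1 p.2) (br q.1 q.2))⁻¹ * p.2 * q.2) (c * d)
    else 0

/-- The counit ε : A → k, ε(δ_t ⊗ v) = δ_{t,e}, extended linearly. -/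
noncomputable def epsA {k : Type*} [Field k] {X : Type*} [Group X]
    (G : Subgroup X) (M : Set X)
    (f : (↥M × ↥G) →₀ k) : k :=
  f.sum fun p c => if (p.1 : X) = 1 then c else 0

/-!
Write `e` for the identity, as an element of `M`. Uniqueness of factorization forces `τ(e,e) = e`,
`⟨δ_e ⊗ u⟩ = e`, and `s ◁ u = e` exactly when `s = e`. Hence the elements `δ_e ⊗ u` multiply as in
the group algebra of `G`, and their products with all other basis elements, on either side, vanish.
So `ρ` is the sum of all elements of `G`, which is invariant under translation.
-/

section TwistedProduct

variable {k M G : Type*} [CommSemiring k]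

/-- The product of the algebra `A` as a bilinear map, for arbitrary operations `τ`, `◁` and
`⟨δ_s ⊗ u⟩` on types `M` and `G`. Unlike `mulA`, it needs neither a field of scalars nor an
ambient group. -/
noncomputable def mulALinear [Group G] (tau : M → M → G) (lho br : M → G → M) :
    (M × G →₀ k) →ₗ[k] (M × G →₀ k) →ₗ[k] (M × G →₀ k) :=
  Finsupp.linearCombination k fun p => Finsupp.linearCombination k fun q =>
    if q.1 = lho p.1 p.2 then
      Finsupp.single
        (lho p.1 (tau (br p.1 p.2) (br q.1 q.2)),
          (tau (br p.1 p.2) (br q.1 q.2))⁻¹ * p.2 * q.2) 1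
    else 0

/-- The counit of the algebra `A` as a linear functional, for an arbitrary base point `e` of `M`. -/
noncomputable def epsALinear (e : M) : (M × G →₀ k) →ₗ[k] k :=
  Finsupp.linearCombination k fun p => if p.1 = e then 1 else 0

/-- The element `ρ = Σ_{u ∈ G} δ_e ⊗ u` of the algebra `A`. -/
noncomputable def integralElement (k : Type*) [CommSemiring k] (G : Type*) [Fintype G] (e : M) :
    M × G →₀ k :=
  ∑ u : G, Finsupp.single (e, u) 1

variable [Group G] {tau : M → M → G} {lho br : M → G → M} {e : M}

theorem mulALinear_single_base_left (htau : tau e e = 1) (hlho : ∀ u, lho e u = e)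
    (hbr : ∀ u, br e u = e) (u : G) (q : M × G) :
    mulALinear tau lho br (Finsupp.single (e, u) (1 : k)) (Finsupp.single q 1) =
      if q.1 = e then Finsupp.single (e, u * q.2) 1 else 0 := by
  obtain ⟨t, v⟩ := q
  by_cases ht : t = e
  · subst ht
    simp [mulALinear, htau, hlho, hbr]
  · simp [mulALinear, hlho, ht]

theorem mulALinear_single_base_right (htau : tau e e = 1) (hlho : ∀ s u, lho s u = e ↔ s = e)
    (hbr : ∀ u, br e u = e) (p : M × G) (v : G) :
    mulALinear tau lho br (Finsupp.single p (1 : k)) (Finsupp.single (e, v) 1) =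
      if p.1 = e then Finsupp.single (e, p.2 * v) 1 else 0 := by
  obtain ⟨s, u⟩ := p
  by_cases hs : s = e
  · subst hs
    simpa using mulALinear_single_base_left htau (fun w => (hlho s w).mpr rfl) hbr u (s, v)
  · simp [mulALinear, eq_comm (a := e), hlho, hs]

variable [Fintype G]

theorem integralElement_mulALinear (htau : tau e e = 1) (hlho : ∀ u, lho e u = e)
    (hbr : ∀ u, br e u = e) (h : M × G →₀ k) :
    mulALinear tau lho br (integralElement k G e) h =
      epsALinear e h • integralElement k G e := by
  suffices hlin : mulALinear tau lho br (integralElement k G e) =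
      (epsALinear e).smulRight (integralElement k G e) from LinearMap.congr_fun hlin h
  ext1 ⟨t, v⟩
  ext1
  by_cases ht : t = e
  · have translate : ∑ u : G, Finsupp.single (e, u * v) (1 : k) = integralElement k G e :=
      Equiv.sum_comp (Equiv.mulRight v) fun w => Finsupp.single (e, w) (1 : k)
    simpa [integralElement, epsALinear, mulALinear_single_base_left htau hlho hbr, ht]
      using translate
  · simp [integralElement, epsALinear, mulALinear_single_base_left htau hlho hbr, ht]

theorem mulALinear_integralElement (htau : tau e e = 1) (hlho : ∀ s u, lho s u = e ↔ s = e)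
    (hbr : ∀ u, br e u = e) (h : M × G →₀ k) :
    mulALinear tau lho br h (integralElement k G e) =
      epsALinear e h • integralElement k G e := by
  suffices hlin : (mulALinear tau lho br).flip (integralElement k G e) =
      (epsALinear e).smulRight (integralElement k G e) from LinearMap.congr_fun hlin h
  ext1 ⟨s, u⟩
  ext1
  by_cases hs : s = e
  · have translate : ∑ v : G, Finsupp.single (e, u * v) (1 : k) = integralElement k G e :=
      Equiv.sum_comp (Equiv.mulLeft u) fun w => Finsupp.single (e, w) (1 : k)
    simpa [integralElement, epsALinear, mulALinear_single_base_right htau hlho hbr, hs]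
      using translate
  · simp [integralElement, epsALinear, mulALinear_single_base_right htau hlho hbr, hs]

end TwistedProduct

section Factorization

variable {X : Type*} [Group X] {G : Subgroup X} {M : Set X}

theorem eq_and_eq_of_coe_mul_coe_eq
    (hinj : Function.Injective fun p : G × M => (p.1 : X) * (p.2 : X))
    {u v : G} {s t : M} (h : (u : X) * s = v * t) : u = v ∧ s = t :=
  Prod.mk.inj (hinj h)

theorem tau_base_left_and_mdot_base_left (hM1 : (1 : X) ∈ M)
    (hinj : Function.Injective fun p : G × M => (p.1 : X) * (p.2 : X))
    {tau : M → M → G} {mdot : M → M → M}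
    (htau : ∀ s t : M, (s : X) * (t : X) = (tau s t : X) * (mdot s t : X)) (t : M) :
    tau ⟨1, hM1⟩ t = 1 ∧ mdot ⟨1, hM1⟩ t = t :=
  eq_and_eq_of_coe_mul_coe_eq hinj (htau ⟨1, hM1⟩ t).symm

theorem lho_eq_base_iff (hM1 : (1 : X) ∈ M)
    (hinj : Function.Injective fun p : G × M => (p.1 : X) * (p.2 : X))
    {rho : M → G → G} {lho : M → G → M}
    (hact : ∀ (s : M) (u : G), (s : X) * (u : X) = (rho s u : X) * (lho s u : X))
    (s : M) (u : G) : lho s u = ⟨1, hM1⟩ ↔ s = ⟨1, hM1⟩ := by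
  have hsu := hact s u
  constructor
  · intro hlho
    have hs : (s : X) * u = rho s u := by simpa [hlho] using hsu
    have factor : ((1 : G) : X) * s = (rho s u * u⁻¹ : G) * (⟨1, hM1⟩ : M) := by
      simp [← hs]
    exact (eq_and_eq_of_coe_mul_coe_eq hinj factor).2
  · rintro rfl
    have factor : (rho ⟨1, hM1⟩ u : X) * lho ⟨1, hM1⟩ u = u * (⟨1, hM1⟩ : M) := by
      simpa using hsu.symm
    exact (eq_and_eq_of_coe_mul_coe_eq hinj factor).2

theorem mulALinear_eq_mulA {k : Type*} [Field k] (tau : M → M → G) (lho br : M → G → M)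
    (f g : M × G →₀ k) : mulALinear tau lho br f g = mulA G M tau lho br f g := by
  simp [mulALinear, mulA, Finsupp.linearCombination_apply, Finsupp.sum, Finset.smul_sum,
    LinearMap.sum_apply]

theorem epsALinear_eq_epsA {k : Type*} [Field k] (hM1 : (1 : X) ∈ M) (f : M × G →₀ k) :
    epsALinear ⟨1, hM1⟩ f = epsA G M f := by
  simp [epsALinear, epsA, Finsupp.linearCombination_apply, Subtype.ext_iff]

end Factorization

theorem statement0_general {k : Type*} [CommSemiring k] {X : Type*} [Group X]
    (G : Subgroup X) (M : Set X) [Fintype G] (hM1 : (1 : X) ∈ M)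
    (hinj : Function.Injective fun p : G × M => (p.1 : X) * (p.2 : X))
    (tau : M → M → G) (mdot : M → M → M)
    (htau : ∀ s t : M, (s : X) * (t : X) = (tau s t : X) * (mdot s t : X))
    (rho : M → G → G) (lho : M → G → M)
    (hact : ∀ (s : M) (u : G), (s : X) * (u : X) = (rho s u : X) * (lho s u : X))
    (br : M → G → M) (hbr : ∀ (s : M) (u : G), mdot s (br s u) = lho s u)
    (h : M × G →₀ k) :
    mulALinear tau lho br (integralElement k G ⟨1, hM1⟩) h =
        epsALinear ⟨1, hM1⟩ h • integralElement k G ⟨1, hM1⟩ ∧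
      mulALinear tau lho br h (integralElement k G ⟨1, hM1⟩) =
        epsALinear ⟨1, hM1⟩ h • integralElement k G ⟨1, hM1⟩ := by
  have hbase := tau_base_left_and_mdot_base_left hM1 hinj htau
  have hlho := lho_eq_base_iff hM1 hinj hact
  have hlho_base : ∀ u, lho ⟨1, hM1⟩ u = ⟨1, hM1⟩ := fun u => (hlho _ u).mpr rfl
  have hbr_base : ∀ u, br ⟨1, hM1⟩ u = ⟨1, hM1⟩ := fun u => by
    rw [← (hbase (br _ u)).2, hbr, hlho_base]
  exact ⟨integralElement_mulALinear (hbase _).1 hlho_base hbr_base h,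
    mulALinear_integralElement (hbase _).1 hlho hbr_base h⟩

/-- The element ρ = Σ_{u ∈ G} δ_e ⊗ u of the algebra A is a
two-sided integral element: for every h ∈ A one has ρ·h = ε(h)·ρ and
h·ρ = ε(h)·ρ. -/
theorem statement0 {k : Type*} [Field k] {X : Type*} [Group X] [Fintype X]
    [DecidableEq X]
    (G : Subgroup X) (M : Set X) [Fintype ↥G]
    (hM1 : (1 : X) ∈ M)
    (hfac : ∀ x : X, ∃! p : ↥G × ↥M, x = (p.1 : X) * (p.2 : X))
    (tau : ↥M → ↥M → ↥G) (mdot : ↥M → ↥M → ↥M)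
    (htau : ∀ s t : ↥M, (s : X) * (t : X) = (tau s t : X) * (mdot s t : X))
    (rho : ↥M → ↥G → ↥G) (lho : ↥M → ↥G → ↥M)
    (hact : ∀ (s : ↥M) (u : ↥G), (s : X) * (u : X) = (rho s u : X) * (lho s u : X))
    (hbij : ∀ s : ↥M, Function.Bijective (mdot s))
    (br : ↥M → ↥G → ↥M)
    (hbr : ∀ (s : ↥M) (u : ↥G), mdot s (br s u) = lho s u) :
    ∀ h : (↥M × ↥G) →₀ k,
      mulA G M tau lho br
          (∑ u : ↥G, Finsupp.single ((⟨1, hM1⟩ : ↥M), u) (1 : k)) h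
        = epsA G M h • (∑ u : ↥G, Finsupp.single ((⟨1, hM1⟩ : ↥M), u) (1 : k))
      ∧ mulA G M tau lho br h
          (∑ u : ↥G, Finsupp.single ((⟨1, hM1⟩ : ↥M), u) (1 : k))
        = epsA G M h • (∑ u : ↥G, Finsupp.single ((⟨1, hM1⟩ : ↥M), u) (1 : k)) := by
  intro h
  simpa only [mulALinear_eq_mulA, epsALinear_eq_epsA, integralElement] using
    statement0_general G M hM1 (fun _ _ hpq => (hfac _).unique rfl hpq) tau mdot htau rho lho hact
      br hbr h
end

section
/- If φ : V → Ṽ and ψ : W → W̃ are type B morphisms between objects of 𝒞, then the linear map φ ⊠ ψ : V ⊗ W → W̃ ⊗ Ṽ defined on homogeneous elements by (φ ⊠ ψ)(ξ ⊗ η) = (ψ(η)◁τ(a^L, a)^{-1} ⊗ φ(ξ))◁τ(a, b), where a = ⟨ξ⟩ and b = ⟨η⟩, is a type B morphism; that is, ⟨(φ ⊠ ψ)(ξ ⊗ η)⟩ = (a·b)^L and (φ ⊠ ψ)((ξ ⊗ η)◁u) = ((φ ⊠ ψ)(ξ ⊗ η))◁((a·b)▷u) for all u ∈ G. -/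
open scoped TensorProduct

/-- An object of the category 𝒞: a finite-dimensional k-vector space with a
direct sum decomposition V = ⊕_{s ∈ M} V_s and a right G-action ξ ↦ ξ◁u
compatible with the grading via ◁ : M × G → M. -/
structure CObj (k : Type*) [Field k] {X : Type*} [Group X] [DecidableEq X]
    (G : Subgroup X) (M : Set X) (lho : ↥M → ↥G → ↥M) where
  V : Type*
  [acg : AddCommGroup V]
  [mod : Module k V]
  grade : ↥M → Submodule k V
  act : ↥G → V →ₗ[k] V
  act_one : ∀ ξ : V, act 1 ξ = ξ
  act_mul : ∀ (u v : ↥G) (ξ : V), act v (act u ξ) = act (u * v) ξ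
  act_grade : ∀ (s : ↥M) (u : ↥G), ∀ ξ ∈ grade s, act u ξ ∈ grade (lho s u)
  isInternal : DirectSum.IsInternal grade
  finiteDim : FiniteDimensional k V

attribute [instance] CObj.acg CObj.mod

/-- A type A morphism in 𝒞: grade-preserving and G-equivariant on homogeneous
elements. -/
def IsTypeA {k : Type*} [Field k] {X : Type*} [Group X] [DecidableEq X]
    {G : Subgroup X} {M : Set X} {lho : ↥M → ↥G → ↥M}
    (V W : CObj k G M lho) (φ : V.V →ₗ[k] W.V) : Prop :=
  ∀ (s : ↥M) (ξ : V.V), ξ ∈ V.grade s →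
    φ ξ ∈ W.grade s ∧ ∀ u : ↥G, φ (V.act u ξ) = W.act u (φ ξ)

/-- A type B morphism in 𝒞: ⟨φ(ξ)⟩ = ⟨ξ⟩^L and φ(ξ◁u) = φ(ξ)◁(⟨ξ⟩▷u) on
homogeneous elements. -/
def IsTypeB {k : Type*} [Field k] {X : Type*} [Group X] [DecidableEq X]
    {G : Subgroup X} {M : Set X} {lho : ↥M → ↥G → ↥M}
    (L : ↥M → ↥M) (rho : ↥M → ↥G → ↥G)
    (V W : CObj k G M lho) (φ : V.V →ₗ[k] W.V) : Prop :=
  ∀ (s : ↥M) (ξ : V.V), ξ ∈ V.grade s →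
    φ ξ ∈ W.grade (L s) ∧ ∀ u : ↥G, φ (V.act u ξ) = W.act (rho s u) (φ ξ)

/-- The value of the map φ ⊠ ψ : V ⊗ W → W̃ ⊗ Ṽ on a pair of homogeneous
elements ξ (of grade a) and η (of grade b):
(φ ⊠ ψ)(ξ ⊗ η) = (ψ(η)◁τ(a^L, a)⁻¹ ⊗ φ(ξ))◁τ(a, b)
              = ψ(η)◁(τ(a^L, a)⁻¹ (a^L▷τ(a, b))) ⊗ φ(ξ)◁τ(a, b),
using the tensor product G-action (x ⊗ y)◁u = x◁(⟨y⟩▷u) ⊗ y◁u and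
⟨φ(ξ)⟩ = a^L. -/
noncomputable def boxEl {k : Type*} [Field k] {X : Type*} [Group X]
    [DecidableEq X] {G : Subgroup X} {M : Set X} {lho : ↥M → ↥G → ↥M}
    (tau : ↥M → ↥M → ↥G) (rho : ↥M → ↥G → ↥G) (L : ↥M → ↥M)
    {V W Vt Wt : CObj k G M lho}
    (φ : V.V →ₗ[k] Vt.V) (ψ : W.V →ₗ[k] Wt.V)
    (a b : ↥M) (ξ : V.V) (η : W.V) : Wt.V ⊗[k] Vt.V :=
  (Wt.act (rho (L a) (tau a b)) (Wt.act (tau (L a) a)⁻¹ (ψ η)))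
    ⊗ₜ[k] (Vt.act (tau a b) (φ ξ))

/-!
The grade of a homogeneous element and the operations `s·t` and `s◁u` only matter modulo left
multiplication by `G`: as `G × M → X` is injective, `s^L` is the only element of `M` with
`s^L * s ∈ G`. Hence `⟨(φ ⊠ ψ)(ξ ⊗ η)⟩ = (a·b)^L` reduces to a computation in `X`, namely
`b^L τ(a^L, a)⁻¹ a^L τ(a, b) (a·b) = b^L τ(a^L, a)⁻¹ (a^L a) b = b^L b ∈ G`.

Equivariance rests on the cocycle identity
`(a▷(b▷u)) τ(a◁(b▷u), b◁u) = τ(a, b) ((a·b)▷u)`, which comes from factorizing `a b u` in two ways.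
It is used for the pair `(a, b)`, and for the pair `(a^L, a)`, where together with
`a^L▷(a▷u) = u` it says how `τ(a^L, a)` changes under the action of `u`.
-/

namespace SubgroupTransversal

variable {X : Type*} [Group X] {G : Subgroup X} {M : Set X}
  {tau : M → M → G} {mdot : M → M → M} {rho : M → G → G} {lho : M → G → M} {L : M → M}
  (hinj : Function.Injective fun p : G × M ↦ (p.1 : X) * (p.2 : X))
  (htau : ∀ s t : M, (s : X) * (t : X) = (tau s t : X) * (mdot s t : X))
  (hact : ∀ (s : M) (u : G), (s : X) * (u : X) = (rho s u : X) * (lho s u : X))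
  (hL : ∀ s : M, (mdot (L s) s : X) = 1)
  (hLrho : ∀ (s : M) (u : G), rho (L s) (rho s u) = u)

include hinj in
theorem left_eq_of_mul_eq_mul {u v : G} {s t : M} (h : (u : X) * s = v * t) : u = v :=
  congrArg Prod.fst (hinj (a₁ := (u, s)) (a₂ := (v, t)) h)

include hinj in
theorem eq_of_mul_mem_of_mul_mem {s t : M} {x : X} (hs : (s : X) * x ∈ G) (ht : (t : X) * x ∈ G) :
    s = t := by
  -- `s` and `t` are both the `M`-component of `x⁻¹`.
  have h : ((⟨s * x, hs⟩⁻¹ : G) : X) * s = ((⟨t * x, ht⟩⁻¹ : G) : X) * t := by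
    simp [mul_assoc]
  exact congrArg Prod.snd (hinj (a₁ := (⟨s * x, hs⟩⁻¹, s)) (a₂ := (⟨t * x, ht⟩⁻¹, t)) h)

include htau in
theorem mdot_mul_mem_iff (s t : M) (x : X) : (mdot s t : X) * x ∈ G ↔ (s : X) * t * x ∈ G := by
  rw [htau, mul_assoc, G.mul_mem_cancel_left (tau s t).2]

include hact in
theorem lho_mul_mem_iff (s : M) (u : G) (x : X) :
    (lho s u : X) * x ∈ G ↔ (s : X) * u * x ∈ G := by
  rw [hact, mul_assoc, G.mul_mem_cancel_left (rho s u).2]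

include htau hL in
theorem leftInv_mul (s : M) : (L s : X) * s = tau (L s) s := by
  rw [htau, hL, mul_one]

include hinj htau hL in
theorem eq_leftInv_of_mul_mem {s t : M} (h : (s : X) * t ∈ G) : s = L t :=
  eq_of_mul_mem_of_mul_mem hinj h (leftInv_mul htau hL t ▸ (tau (L t) t).2)

include hinj hact in
theorem rho_mul (s : M) (u v : G) : rho s (u * v) = rho s u * rho (lho s u) v := by
  refine left_eq_of_mul_eq_mul hinj (s := lho s (u * v)) (t := lho (lho s u) v) ?_
  calc (rho s (u * v) : X) * lho s (u * v)
      = s * u * v := by rw [← hact, Subgroup.coe_mul, mul_assoc]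
    _ = rho s u * (lho s u * v) := by rw [hact, mul_assoc]
    _ = (rho s u * rho (lho s u) v : G) * lho (lho s u) v := by
      rw [hact, Subgroup.coe_mul, mul_assoc]

include hinj hact in
theorem rho_eq_self_of_coe_eq_one {s : M} (hs : (s : X) = 1) (u : G) : rho s u = u :=
  left_eq_of_mul_eq_mul hinj (s := lho s u) (t := s) (by rw [← hact, hs, one_mul, mul_one])

include hinj htau hact in
theorem rho_rho_mul_tau (a b : M) (u : G) :
    rho a (rho b u) * tau (lho a (rho b u)) (lho b u) = tau a b * rho (mdot a b) u := by
  refine left_eq_of_mul_eq_mul hinj (s := mdot (lho a (rho b u)) (lho b u))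
    (t := lho (mdot a b) u) ?_
  calc ((rho a (rho b u) * tau (lho a (rho b u)) (lho b u) : G) : X) *
        mdot (lho a (rho b u)) (lho b u)
      = rho a (rho b u) * lho a (rho b u) * lho b u := by
        rw [Subgroup.coe_mul, mul_assoc, ← htau, mul_assoc]
    _ = a * b * u := by rw [← hact, mul_assoc, ← hact, mul_assoc]
    _ = tau a b * (mdot a b * u) := by rw [htau, mul_assoc]
    _ = (tau a b * rho (mdot a b) u : G) * lho (mdot a b) u := by
        rw [hact, Subgroup.coe_mul, mul_assoc]

include hinj htau hact hL in
theorem leftInv_lho (a : M) (u : G) : L (lho a u) = lho (L a) (rho a u) := by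
  refine (eq_leftInv_of_mul_mem hinj htau hL ?_).symm
  rw [lho_mul_mem_iff hact, mul_assoc, ← hact, ← mul_assoc, leftInv_mul htau hL]
  exact G.mul_mem (tau (L a) a).2 u.2

include hinj htau hact hL hLrho in
theorem mul_tau_leftInv_lho (a : M) (u : G) :
    u * tau (L (lho a u)) (lho a u) = tau (L a) a * u := by
  simpa only [hLrho, ← leftInv_lho hinj htau hact hL,
    rho_eq_self_of_coe_eq_one hinj hact (hL a)] using rho_rho_mul_tau hinj htau hact (L a) a u

include hinj htau hact hL in
theorem mdot_lho_leftInv_eq_leftInv_mdot (a b : M) :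
    mdot (lho (lho (L b) (tau (L a) a)⁻¹) (rho (L a) (tau a b))) (lho (L a) (tau a b)) =
      L (mdot a b) := by
  refine eq_leftInv_of_mul_mem hinj htau hL ?_
  have cancel : (L b : X) * ((tau (L a) a)⁻¹ : G) * (L a * tau a b * mdot a b) = tau (L b) b := by
    calc (L b : X) * ((tau (L a) a)⁻¹ : G) * (L a * tau a b * mdot a b)
        = L b * ((tau (L a) a)⁻¹ : G) * (L a * a * b) := by
          rw [mul_assoc (L a : X), ← htau, mul_assoc (L a : X)]
      _ = L b * b := by rw [leftInv_mul htau hL a, Subgroup.coe_inv]; group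
      _ = tau (L b) b := leftInv_mul htau hL b
  rw [mdot_mul_mem_iff htau, mul_assoc, lho_mul_mem_iff hact, mul_assoc, ← mul_assoc (rho _ _ : X),
    ← hact, lho_mul_mem_iff hact, cancel]
  exact (tau (L b) b).2

include hinj htau hact hL hLrho in
theorem inv_tau_leftInv_mul_rho (a b : M) (u : G) :
    rho b u * ((tau (L (lho a (rho b u))) (lho a (rho b u)))⁻¹ *
        rho (L (lho a (rho b u))) (tau (lho a (rho b u)) (lho b u))) =
      (tau (L a) a)⁻¹ *
        (rho (L a) (tau a b) * rho (lho (L a) (tau a b)) (rho (mdot a b) u)) := by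
  set v := rho b u
  set a' := lho a v with ha'
  have tau_inv : v * (tau (L a') a')⁻¹ = (tau (L a) a)⁻¹ * v := by
    rw [mul_inv_eq_iff_eq_mul, mul_assoc, mul_tau_leftInv_lho hinj htau hact hL hLrho,
      inv_mul_cancel_left]
  calc v * ((tau (L a') a')⁻¹ * rho (L a') (tau a' (lho b u)))
      = (tau (L a) a)⁻¹ * (v * rho (L a') (tau a' (lho b u))) := by
        rw [← mul_assoc, tau_inv, mul_assoc]
    _ = (tau (L a) a)⁻¹ * rho (L a) (rho a v * tau a' (lho b u)) := by
        rw [rho_mul hinj hact, hLrho, ha', leftInv_lho hinj htau hact hL]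
    _ = (tau (L a) a)⁻¹ *
          (rho (L a) (tau a b) * rho (lho (L a) (tau a b)) (rho (mdot a b) u)) := by
        rw [rho_rho_mul_tau hinj htau hact, rho_mul hinj hact]

end SubgroupTransversal

open SubgroupTransversal in
theorem statement2_general {k : Type*} [Field k] {X : Type*} [Group X] [DecidableEq X]
    {G : Subgroup X} {M : Set X}
    (hinj : Function.Injective fun p : G × M ↦ (p.1 : X) * (p.2 : X))
    {tau : M → M → G} {mdot : M → M → M}
    (htau : ∀ s t : M, (s : X) * (t : X) = (tau s t : X) * (mdot s t : X))
    {rho : M → G → G} {lho : M → G → M}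
    (hact : ∀ (s : M) (u : G), (s : X) * (u : X) = (rho s u : X) * (lho s u : X))
    {L : M → M} (hL : ∀ s : M, (mdot (L s) s : X) = 1)
    (hLrho : ∀ (s : M) (u : G), rho (L s) (rho s u) = u)
    {V W Vt Wt : CObj k G M lho} {φ : V.V →ₗ[k] Vt.V} {ψ : W.V →ₗ[k] Wt.V}
    (hφ : IsTypeB L rho V Vt φ) (hψ : IsTypeB L rho W Wt ψ)
    (a b : M) (ξ : V.V) (η : W.V) (hξ : ξ ∈ V.grade a) (hη : η ∈ W.grade b) :
    mdot (lho (lho (L b) (tau (L a) a)⁻¹) (rho (L a) (tau a b))) (lho (L a) (tau a b)) =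
        L (mdot a b) ∧
      ∀ u : G,
        boxEl tau rho L φ ψ (lho a (rho b u)) (lho b u) (V.act (rho b u) ξ) (W.act u η) =
          Wt.act (rho (lho (L a) (tau a b)) (rho (mdot a b) u))
              (Wt.act (rho (L a) (tau a b)) (Wt.act (tau (L a) a)⁻¹ (ψ η))) ⊗ₜ[k]
            Vt.act (rho (mdot a b) u) (Vt.act (tau a b) (φ ξ)) := by
  refine ⟨mdot_lho_leftInv_eq_leftInv_mdot hinj htau hact hL a b, fun u ↦ ?_⟩
  have hφu := (hφ a ξ hξ).2 (rho b u)
  have hψu := (hψ b η hη).2 u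
  simp only [boxEl, hφu, hψu, CObj.act_mul, mul_assoc]
  rw [rho_rho_mul_tau hinj htau hact, inv_tau_leftInv_mul_rho hinj htau hact hL hLrho]

/-- If φ : V → Ṽ and ψ : W → W̃ are type B morphisms between
objects of 𝒞, then φ ⊠ ψ : V ⊗ W → W̃ ⊗ Ṽ is a type B morphism: on homogeneous
ξ of grade a and η of grade b one has ⟨(φ ⊠ ψ)(ξ ⊗ η)⟩ = (a·b)^L (the grade of
the tensor being the · product of the grades of the factors), and
(φ ⊠ ψ)((ξ ⊗ η)◁u) = ((φ ⊠ ψ)(ξ ⊗ η))◁((a·b)▷u), where on tensor products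
(ξ ⊗ η)◁u = ξ◁(b▷u) ⊗ η◁u. -/
theorem statement2 {k : Type*} [Field k] {X : Type*} [Group X] [Fintype X]
    [DecidableEq X]
    (G : Subgroup X) (M : Set X)
    (hM1 : (1 : X) ∈ M)
    (hfac : ∀ x : X, ∃! p : ↥G × ↥M, x = (p.1 : X) * (p.2 : X))
    (tau : ↥M → ↥M → ↥G) (mdot : ↥M → ↥M → ↥M)
    (htau : ∀ s t : ↥M, (s : X) * (t : X) = (tau s t : X) * (mdot s t : X))
    (rho : ↥M → ↥G → ↥G) (lho : ↥M → ↥G → ↥M)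
    (hact : ∀ (s : ↥M) (u : ↥G), (s : X) * (u : X) = (rho s u : X) * (lho s u : X))
    (L : ↥M → ↥M)
    (hL : ∀ s : ↥M, (mdot (L s) s : X) = 1)
    (hLuniq : ∀ s t : ↥M, (mdot t s : X) = 1 → t = L s)
    (hLL : ∀ s : ↥M, L (L s) = s)
    (hLrho : ∀ (s : ↥M) (u : ↥G), rho (L s) (rho s u) = u)
    (V W Vt Wt : CObj k G M lho)
    (φ : V.V →ₗ[k] Vt.V) (ψ : W.V →ₗ[k] Wt.V)
    (hφ : IsTypeB L rho V Vt φ) (hψ : IsTypeB L rho W Wt ψ) :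
    ∀ (a b : ↥M) (ξ : V.V) (η : W.V), ξ ∈ V.grade a → η ∈ W.grade b →
      -- grade condition: ⟨(φ ⊠ ψ)(ξ ⊗ η)⟩ = (a·b)^L
      (mdot (lho (lho (L b) ((tau (L a) a)⁻¹)) (rho (L a) (tau a b)))
          (lho (L a) (tau a b))
        = L (mdot a b))
      -- action condition: (φ ⊠ ψ)((ξ ⊗ η)◁u) = ((φ ⊠ ψ)(ξ ⊗ η))◁((a·b)▷u)
      ∧ ∀ u : ↥G,
          boxEl tau rho L φ ψ (lho a (rho b u)) (lho b u)
              (V.act (rho b u) ξ) (W.act u η)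
            = (Wt.act (rho (lho (L a) (tau a b)) (rho (mdot a b) u))
                  (Wt.act (rho (L a) (tau a b)) (Wt.act (tau (L a) a)⁻¹ (ψ η))))
                ⊗ₜ[k] (Vt.act (rho (mdot a b) u) (Vt.act (tau a b) (φ ξ))) :=
  statement2_general (fun _ _ h ↦ (hfac _).unique rfl h) htau hact hL hLrho hφ hψ
end

section
/- The linear map P : A → A defined by P(δ_s ⊗ u) = δ_{s◁(u τ(a^L, a)^{-1})} ⊗ τ(a^L, a) u^{-1}, where a = ⟨δ_s ⊗ u⟩, is a type B morphism: ⟨P(δ_s ⊗ u)⟩ = a^L, and P((δ_s ⊗ u)◁v) = P(δ_s ⊗ u)◁(a▷v) for all v ∈ G. -/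
/-- On basis indices, the map P : A → A,
P(δ_s ⊗ u) = δ_{s◁(u τ(a^L,a)⁻¹)} ⊗ τ(a^L,a) u⁻¹, where a = ⟨δ_s ⊗ u⟩. -/
noncomputable def PIdx {X : Type*} [Group X] (G : Subgroup X) (M : Set X)
    (tau : ↥M → ↥M → ↥G) (lho : ↥M → ↥G → ↥M) (br : ↥M → ↥G → ↥M)
    (L : ↥M → ↥M) (p : ↥M × ↥G) : ↥M × ↥G :=
  (lho p.1 (p.2 * (tau (L (br p.1 p.2)) (br p.1 p.2))⁻¹),
    tau (L (br p.1 p.2)) (br p.1 p.2) * p.2⁻¹)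

/-- On basis indices, the right G-action on A:
(δ_s ⊗ u)◁v = δ_{s◁(a▷v)} ⊗ (a▷v)⁻¹ u v, where a = ⟨δ_s ⊗ u⟩. -/
noncomputable def actIdx {X : Type*} [Group X] (G : Subgroup X) (M : Set X)
    (rho : ↥M → ↥G → ↥G) (lho : ↥M → ↥G → ↥M) (br : ↥M → ↥G → ↥M)
    (p : ↥M × ↥G) (v : ↥G) : ↥M × ↥G :=
  (lho p.1 (rho (br p.1 p.2) v), (rho (br p.1 p.2) v)⁻¹ * p.2 * v)

/-!
`M` meets each right coset of `G` at most once, `s ◁ u` and `s · t` represent the cosets of `s u`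
and `s t`, and every identity below compares two factorizations of one triple product.

Factoring `s t r` gives `(s · t) · r = (s ◁ τ(t, r)) · (t · r)`. For `t = a^L`, `r = a` the last
factor is `e`, so `(s ◁ u τ(a^L, a)⁻¹) · a^L = s` whenever `s · a = s ◁ u`; this is the grade
condition. Factoring `s t u` describes `(s · t) ◁ u` and `τ(s, t) ((s · t) ▷ u)`. For `s = a^L`,
`t = a` it gives `(a ◁ v)^L = a^L ◁ (a ▷ v)` and `τ((a ◁ v)^L, a ◁ v) = v⁻¹ τ(a^L, a) v`, from which
the action condition follows.
-/

/-- The operations `τ`, `·`, `▷`, `◁` (here `tau`, `mdot`, `rho`, `lho`) that a set `M` of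
representatives of right cosets of `G` inherits from unique factorization in `G M`. Existence of
factorizations is assumed only for the products `s t` and `s u` that define the operations. -/
structure IsCosetFactorization {X : Type*} [Group X] (G : Subgroup X) (M : Set X)
    (tau : M → M → G) (mdot : M → M → M) (rho : M → G → G) (lho : M → G → M) : Prop where
  injective : Function.Injective fun p : G × M => (p.1 : X) * (p.2 : X)
  mul_eq_tau_mul_mdot : ∀ s t : M, (s : X) * t = tau s t * mdot s t
  mul_eq_rho_mul_lho : ∀ (s : M) (u : G), (s : X) * u = rho s u * lho s u

namespace IsCosetFactorization

variable {X : Type*} [Group X] {G : Subgroup X} {M : Set X}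
  {tau : M → M → G} {mdot : M → M → M} {rho : M → G → G} {lho : M → G → M}
  {br : M → G → M} {L : M → M}

theorem eq_and_eq_of_mul_eq_mul (h : IsCosetFactorization G M tau mdot rho lho)
    {g g' : G} {m m' : M} (hgm : (g : X) * m = g' * m') : g = g' ∧ m = m' :=
  Prod.mk.inj (@h.injective (g, m) (g', m') hgm)

theorem rho_eq_and_lho_eq_of_coe_eq_one (h : IsCosetFactorization G M tau mdot rho lho)
    {e : M} (he : (e : X) = 1) (u : G) : rho e u = u ∧ lho e u = e := by
  refine h.eq_and_eq_of_mul_eq_mul ?_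
  rw [← h.mul_eq_rho_mul_lho, he, one_mul, mul_one]

theorem lho_one (h : IsCosetFactorization G M tau mdot rho lho) (s : M) : lho s 1 = s := by
  refine (h.eq_and_eq_of_mul_eq_mul (g := rho s 1) (g' := 1) ?_).2
  rw [← h.mul_eq_rho_mul_lho, OneMemClass.coe_one, mul_one, one_mul]

theorem lho_lho (h : IsCosetFactorization G M tau mdot rho lho) (s : M) (u v : G) :
    lho (lho s u) v = lho s (u * v) := by
  refine (h.eq_and_eq_of_mul_eq_mul (g := rho s u * rho (lho s u) v)
    (g' := rho s (u * v)) ?_).2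
  calc ((rho s u * rho (lho s u) v : G) : X) * lho (lho s u) v
      = rho s u * lho s u * v := by
        rw [Subgroup.coe_mul, mul_assoc, ← h.mul_eq_rho_mul_lho, mul_assoc]
    _ = s * (u * v : G) := by rw [← h.mul_eq_rho_mul_lho, Subgroup.coe_mul, mul_assoc]
    _ = rho s (u * v) * lho s (u * v) := h.mul_eq_rho_mul_lho _ _

theorem mdot_of_coe_eq_one (h : IsCosetFactorization G M tau mdot rho lho)
    {e : M} (he : (e : X) = 1) (s : M) : mdot s e = s := by
  refine (h.eq_and_eq_of_mul_eq_mul (g := tau s e) (g' := 1) ?_).2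
  rw [← h.mul_eq_tau_mul_mdot, he, mul_one, OneMemClass.coe_one, one_mul]

theorem mdot_left_injective (h : IsCosetFactorization G M tau mdot rho lho) (t : M) :
    Function.Injective (mdot · t) := by
  intro s s' (hs : mdot s t = mdot s' t)
  refine (h.eq_and_eq_of_mul_eq_mul (g := (tau s t)⁻¹) (g' := (tau s' t)⁻¹) ?_).2
  apply mul_right_cancel (b := (t : X))
  simp only [mul_assoc, h.mul_eq_tau_mul_mdot, InvMemClass.coe_inv, inv_mul_cancel_left, hs]

theorem mdot_mdot (h : IsCosetFactorization G M tau mdot rho lho) (s t r : M) :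
    mdot (mdot s t) r = mdot (lho s (tau t r)) (mdot t r) := by
  refine (h.eq_and_eq_of_mul_eq_mul (g := tau s t * tau (mdot s t) r)
    (g' := rho s (tau t r) * tau (lho s (tau t r)) (mdot t r)) ?_).2
  calc ((tau s t * tau (mdot s t) r : G) : X) * mdot (mdot s t) r
      = tau s t * mdot s t * r := by
        rw [Subgroup.coe_mul, mul_assoc, ← h.mul_eq_tau_mul_mdot, mul_assoc]
    _ = s * (tau t r * mdot t r) := by
        rw [← h.mul_eq_tau_mul_mdot, ← h.mul_eq_tau_mul_mdot, mul_assoc]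
    _ = rho s (tau t r) * lho s (tau t r) * mdot t r := by rw [← h.mul_eq_rho_mul_lho, mul_assoc]
    _ = (rho s (tau t r) * tau (lho s (tau t r)) (mdot t r) : G) *
          mdot (lho s (tau t r)) (mdot t r) := by
        rw [Subgroup.coe_mul, mul_assoc, mul_assoc, ← h.mul_eq_tau_mul_mdot]

theorem tau_mul_rho_mdot_and_lho_mdot (h : IsCosetFactorization G M tau mdot rho lho)
    (s t : M) (u : G) :
    tau s t * rho (mdot s t) u = rho s (rho t u) * tau (lho s (rho t u)) (lho t u) ∧
      lho (mdot s t) u = mdot (lho s (rho t u)) (lho t u) := by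
  refine h.eq_and_eq_of_mul_eq_mul ?_
  calc ((tau s t * rho (mdot s t) u : G) : X) * lho (mdot s t) u
      = tau s t * mdot s t * u := by
        rw [Subgroup.coe_mul, mul_assoc, ← h.mul_eq_rho_mul_lho, mul_assoc]
    _ = s * (rho t u * lho t u) := by
        rw [← h.mul_eq_tau_mul_mdot, ← h.mul_eq_rho_mul_lho, mul_assoc]
    _ = rho s (rho t u) * lho s (rho t u) * lho t u := by rw [← h.mul_eq_rho_mul_lho s, mul_assoc]
    _ = (rho s (rho t u) * tau (lho s (rho t u)) (lho t u) : G) *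
          mdot (lho s (rho t u)) (lho t u) := by
        rw [Subgroup.coe_mul, mul_assoc, mul_assoc, ← h.mul_eq_tau_mul_mdot]

theorem tau_mul_rho_mdot (h : IsCosetFactorization G M tau mdot rho lho) (s t : M) (u : G) :
    tau s t * rho (mdot s t) u = rho s (rho t u) * tau (lho s (rho t u)) (lho t u) :=
  (h.tau_mul_rho_mdot_and_lho_mdot s t u).1

theorem lho_mdot (h : IsCosetFactorization G M tau mdot rho lho) (s t : M) (u : G) :
    lho (mdot s t) u = mdot (lho s (rho t u)) (lho t u) :=
  (h.tau_mul_rho_mdot_and_lho_mdot s t u).2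

theorem leftInv_lho (h : IsCosetFactorization G M tau mdot rho lho)
    (hL : ∀ s : M, (mdot (L s) s : X) = 1) (a : M) (v : G) :
    L (lho a v) = lho (L a) (rho a v) := by
  apply h.mdot_left_injective (lho a v)
  calc mdot (L (lho a v)) (lho a v)
      = mdot (L a) a := Subtype.ext ((hL _).trans (hL a).symm)
    _ = lho (mdot (L a) a) v := (h.rho_eq_and_lho_eq_of_coe_eq_one (hL a) v).2.symm
    _ = mdot (lho (L a) (rho a v)) (lho a v) := h.lho_mdot (L a) a v

theorem tau_leftInv_lho (h : IsCosetFactorization G M tau mdot rho lho)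
    (hL : ∀ s : M, (mdot (L s) s : X) = 1)
    (hLrho : ∀ (s : M) (u : G), rho (L s) (rho s u) = u) (a : M) (v : G) :
    tau (L (lho a v)) (lho a v) = v⁻¹ * tau (L a) a * v := by
  have hconj : tau (L a) a * v = v * tau (L (lho a v)) (lho a v) := by
    simpa only [(h.rho_eq_and_lho_eq_of_coe_eq_one (hL a) v).1, hLrho,
      ← h.leftInv_lho hL] using h.tau_mul_rho_mdot (L a) a v
  rw [mul_assoc, hconj, inv_mul_cancel_left]

theorem mdot_lho_of_coe_mdot_eq_one (h : IsCosetFactorization G M tau mdot rho lho)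
    {s a b : M} {u : G} (hba : (mdot b a : X) = 1) (hsa : mdot s a = lho s u) :
    mdot (lho s (u * (tau b a)⁻¹)) b = s := by
  apply h.mdot_left_injective a
  calc mdot (mdot (lho s (u * (tau b a)⁻¹)) b) a
      = mdot (lho (lho s (u * (tau b a)⁻¹)) (tau b a)) (mdot b a) := h.mdot_mdot _ _ _
    _ = lho (lho s (u * (tau b a)⁻¹)) (tau b a) := h.mdot_of_coe_eq_one hba _
    _ = lho s u := by rw [h.lho_lho, inv_mul_cancel_right]
    _ = mdot s a := hsa.symm

theorem br_actIdx (h : IsCosetFactorization G M tau mdot rho lho)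
    (hinj : ∀ s : M, Function.Injective (mdot s))
    (hbr : ∀ (s : M) (u : G), mdot s (br s u) = lho s u) (p : M × G) (v : G) :
    br (actIdx G M rho lho br p v).1 (actIdx G M rho lho br p v).2 = lho (br p.1 p.2) v := by
  obtain ⟨s, u⟩ := p
  apply hinj (lho s (rho (br s u) v))
  calc mdot (lho s (rho (br s u) v)) (br _ ((rho (br s u) v)⁻¹ * u * v))
      = lho (lho s (rho (br s u) v)) ((rho (br s u) v)⁻¹ * u * v) := hbr _ _
    _ = lho (lho s u) v := by
        rw [h.lho_lho, h.lho_lho, mul_assoc, mul_inv_cancel_left]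
    _ = lho (mdot s (br s u)) v := by rw [hbr]
    _ = mdot (lho s (rho (br s u) v)) (lho (br s u) v) := h.lho_mdot s (br s u) v

theorem br_PIdx (h : IsCosetFactorization G M tau mdot rho lho)
    (hinj : ∀ s : M, Function.Injective (mdot s))
    (hbr : ∀ (s : M) (u : G), mdot s (br s u) = lho s u)
    (hL : ∀ s : M, (mdot (L s) s : X) = 1) (p : M × G) :
    br (PIdx G M tau lho br L p).1 (PIdx G M tau lho br L p).2 = L (br p.1 p.2) := by
  obtain ⟨s, u⟩ := p
  set t := tau (L (br s u)) (br s u)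
  apply hinj (lho s (u * t⁻¹))
  calc mdot (lho s (u * t⁻¹)) (br _ (t * u⁻¹))
      = lho (lho s (u * t⁻¹)) (t * u⁻¹) := hbr _ _
    _ = s := by
        rw [h.lho_lho, mul_assoc, inv_mul_cancel_left, mul_inv_cancel, h.lho_one]
    _ = mdot (lho s (u * t⁻¹)) (L (br s u)) :=
        (h.mdot_lho_of_coe_mdot_eq_one (hL _) (hbr s u)).symm

theorem PIdx_actIdx (h : IsCosetFactorization G M tau mdot rho lho)
    (hinj : ∀ s : M, Function.Injective (mdot s))
    (hbr : ∀ (s : M) (u : G), mdot s (br s u) = lho s u)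
    (hL : ∀ s : M, (mdot (L s) s : X) = 1)
    (hLrho : ∀ (s : M) (u : G), rho (L s) (rho s u) = u) (p : M × G) (v : G) :
    PIdx G M tau lho br L (actIdx G M rho lho br p v) =
      actIdx G M rho lho br (PIdx G M tau lho br L p) (rho (br p.1 p.2) v) := by
  have hrho : rho (br (PIdx G M tau lho br L p).1 (PIdx G M tau lho br L p).2)
      (rho (br p.1 p.2) v) = v := by
    rw [h.br_PIdx hinj hbr hL, hLrho]
  rw [PIdx, h.br_actIdx hinj hbr, h.tau_leftInv_lho hL hLrho, actIdx, actIdx, hrho]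
  simp only [PIdx, h.lho_lho]
  ext1
  · congr 1
    group
  · group

end IsCosetFactorization

theorem statement5_general {k : Type*} [Semiring k] {X : Type*} [Group X]
    {G : Subgroup X} {M : Set X} {tau : M → M → G} {mdot : M → M → M}
    {rho : M → G → G} {lho : M → G → M} {br : M → G → M} {L : M → M}
    (h : IsCosetFactorization G M tau mdot rho lho)
    (hinj : ∀ s : M, Function.Injective (mdot s))
    (hbr : ∀ (s : M) (u : G), mdot s (br s u) = lho s u)
    (hL : ∀ s : M, (mdot (L s) s : X) = 1)
    (hLrho : ∀ (s : M) (u : G), rho (L s) (rho s u) = u) (s : M) (u : G) :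
    br (PIdx G M tau lho br L (s, u)).1 (PIdx G M tau lho br L (s, u)).2 = L (br s u) ∧
      ∀ v : G,
        Finsupp.lmapDomain k k (PIdx G M tau lho br L)
            (Finsupp.lmapDomain k k (fun p => actIdx G M rho lho br p v)
              (Finsupp.single (s, u) (1 : k))) =
          Finsupp.lmapDomain k k (fun p => actIdx G M rho lho br p (rho (br s u) v))
            (Finsupp.lmapDomain k k (PIdx G M tau lho br L)
              (Finsupp.single (s, u) (1 : k))) := by
  refine ⟨h.br_PIdx hinj hbr hL (s, u), fun v => ?_⟩
  simp only [Finsupp.lmapDomain_apply, Finsupp.mapDomain_single]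
  rw [h.PIdx_actIdx hinj hbr hL hLrho (s, u) v]

/-- The linear map P : A → A defined by
P(δ_s ⊗ u) = δ_{s◁(u τ(a^L,a)⁻¹)} ⊗ τ(a^L,a) u⁻¹, a = ⟨δ_s ⊗ u⟩, is a type B
morphism: ⟨P(δ_s ⊗ u)⟩ = a^L and P((δ_s ⊗ u)◁v) = P(δ_s ⊗ u)◁(a▷v) for all
v ∈ G. -/
theorem statement5 {k : Type*} [Field k] {X : Type*} [Group X] [Fintype X]
    [DecidableEq X]
    (G : Subgroup X) (M : Set X)
    (hM1 : (1 : X) ∈ M)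
    (hfac : ∀ x : X, ∃! p : ↥G × ↥M, x = (p.1 : X) * (p.2 : X))
    (tau : ↥M → ↥M → ↥G) (mdot : ↥M → ↥M → ↥M)
    (htau : ∀ s t : ↥M, (s : X) * (t : X) = (tau s t : X) * (mdot s t : X))
    (rho : ↥M → ↥G → ↥G) (lho : ↥M → ↥G → ↥M)
    (hact : ∀ (s : ↥M) (u : ↥G), (s : X) * (u : X) = (rho s u : X) * (lho s u : X))
    (hbij : ∀ s : ↥M, Function.Bijective (mdot s))
    (br : ↥M → ↥G → ↥M)
    (hbr : ∀ (s : ↥M) (u : ↥G), mdot s (br s u) = lho s u)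
    (hbrgrade : ∀ (s : ↥M) (u v : ↥G),
      br (lho s (rho (br s u) v)) ((rho (br s u) v)⁻¹ * u * v) = lho (br s u) v)
    (L : ↥M → ↥M)
    (hL : ∀ s : ↥M, (mdot (L s) s : X) = 1)
    (hLuniq : ∀ s t : ↥M, (mdot t s : X) = 1 → t = L s)
    (hLL : ∀ s : ↥M, L (L s) = s)
    (hLrho : ∀ (s : ↥M) (u : ↥G), rho (L s) (rho s u) = u) :
    ∀ (s : ↥M) (u : ↥G),
      -- grade condition: ⟨P(δ_s ⊗ u)⟩ = a^L where a = ⟨δ_s ⊗ u⟩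
      br (PIdx G M tau lho br L (s, u)).1 (PIdx G M tau lho br L (s, u)).2
        = L (br s u)
      -- action condition: P((δ_s ⊗ u)◁v) = P(δ_s ⊗ u)◁(a▷v)
      ∧ ∀ v : ↥G,
          Finsupp.lmapDomain k k (PIdx G M tau lho br L)
              (Finsupp.lmapDomain k k (fun p => actIdx G M rho lho br p v)
                (Finsupp.single (s, u) (1 : k)))
            = Finsupp.lmapDomain k k
                (fun p => actIdx G M rho lho br p (rho (br s u) v))
                (Finsupp.lmapDomain k k (PIdx G M tau lho br L)
                  (Finsupp.single (s, u) (1 : k))) := by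
  have h : IsCosetFactorization G M tau mdot rho lho :=
    ⟨fun _ q hpq => (hfac _).unique rfl hpq, htau, hact⟩
  exact statement5_general h (fun s => (hbij s).injective) hbr hL hLrho
end

section
/- For every basis element δ_s ⊗ u of A one has P(P(δ_s ⊗ u)◁τ(a, a^L)) = δ_s ⊗ u, where a = ⟨δ_s ⊗ u⟩ and P : A → A is defined by P(δ_s ⊗ u) = δ_{s◁(u τ(a^L, a)^{-1})} ⊗ τ(a^L, a) u^{-1}. -/
/-!
A product `s x` is only ever needed up to left multiplication by `G`, and `a = ⟨δ_s ⊗ u⟩` is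
characterised by the equality of right cosets `G s u = G s a`. Comparing cosets gives
`⟨P(δ_s ⊗ u)⟩ = a^L` and `⟨ξ◁v⟩ = ⟨ξ⟩◁v`. Since `a^L (a a^L) = (a^L a) a^L`, with
`a a^L = τ(a, a^L)` and `a^L a = τ(a^L, a)` both in `G`, uniqueness of factorization gives
`a^L▷τ(a, a^L) = τ(a^L, a)` and `a^L◁τ(a, a^L) = a^L`. Hence
`P(δ_s ⊗ u)◁τ(a, a^L) = δ_{s◁u} ⊗ u⁻¹ τ(a, a^L)` still has degree `a^L`, and as `a^{LL} = a` the
second application of `P` divides out `τ(a, a^L)` and returns `δ_{(s◁u)◁u⁻¹} ⊗ u`.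
-/

section

open scoped Pointwise RightActions

variable {X : Type*} [Group X] {G : Subgroup X} {M : Set X}

theorem rightCoset_eq_of_eq_coe_mul {x y : X} {g : G} (h : x = (g : X) * y) :
    (G : Set X) <• x = (G : Set X) <• y := by
  rw [h, op_smul_mul, rightCoset_mem_rightCoset G g.2]

theorem eq_of_rightCoset_eq (hGM : Subgroup.IsComplement (G : Set X) M) {s t : M}
    (h : (G : Set X) <• (s : X) = (G : Set X) <• (t : X)) : s = t := by
  have hmem : (t : X) * (s : X)⁻¹ ∈ G := (rightCoset_eq_iff G).mp h
  exact (Subgroup.isComplement_iff_existsUnique_mul_inv_mem.mp hGM t).unique hmem (by simp)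

variable {tau : M → M → G} {mdot : M → M → M} {rho : M → G → G} {lho : M → G → M}
  {br : M → G → M} {L : M → M}
  (hGM : Subgroup.IsComplement (G : Set X) M)
  (htau : ∀ s t : M, (s : X) * (t : X) = (tau s t : X) * (mdot s t : X))
  (hact : ∀ (s : M) (u : G), (s : X) * (u : X) = (rho s u : X) * (lho s u : X))
  (hinj : ∀ s : M, Function.Injective (mdot s))
  (hbr : ∀ (s : M) (u : G), mdot s (br s u) = lho s u)
  (hL : ∀ s : M, (mdot (L s) s : X) = 1)
  (hLL : Function.Involutive L)

section Action

include hGM hact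

theorem rho_eq_and_lho_eq_of_mul_eq {s t : M} {u g : G}
    (h : (s : X) * (u : X) = (g : X) * (t : X)) : rho s u = g ∧ lho s u = t :=
  Prod.ext_iff.mp <| hGM.1 (a₁ := (rho s u, lho s u)) (a₂ := (g, t)) ((hact s u).symm.trans h)

theorem lho_one (s : M) : lho s 1 = s :=
  (rho_eq_and_lho_eq_of_mul_eq hGM hact (g := 1) (by simp)).2

theorem lho_lho (s : M) (u v : G) : lho (lho s u) v = lho s (u * v) := by
  symm
  refine (rho_eq_and_lho_eq_of_mul_eq hGM hact (g := rho s u * rho (lho s u) v) ?_).2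
  push_cast
  rw [← mul_assoc, hact s u, mul_assoc, hact (lho s u) v, mul_assoc]

end Action

include htau

theorem coe_tau_of_mdot_eq_one {s t : M} (h : (mdot s t : X) = 1) :
    (tau s t : X) = (s : X) * (t : X) := by
  rw [htau, h, mul_one]

include hGM hact

theorem rho_tau_and_lho_tau_of_mdot_eq_one {s t : M} (hst : (mdot s t : X) = 1)
    (hts : (mdot t s : X) = 1) : rho s (tau t s) = tau s t ∧ lho s (tau t s) = s := by
  apply rho_eq_and_lho_eq_of_mul_eq hGM hact
  rw [coe_tau_of_mdot_eq_one htau hst, coe_tau_of_mdot_eq_one htau hts, mul_assoc]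

include hinj hbr

theorem br_eq_iff_rightCoset_eq {s a : M} {u : G} :
    br s u = a ↔ (G : Set X) <• ((s : X) * (u : X)) = (G : Set X) <• ((s : X) * (a : X)) := by
  rw [← (hinj s).eq_iff, hbr, rightCoset_eq_of_eq_coe_mul (hact s u),
    rightCoset_eq_of_eq_coe_mul (htau s a)]
  exact ⟨fun h => by rw [h], eq_of_rightCoset_eq hGM⟩

theorem br_actIdx (p : M × G) (v : G) :
    br (actIdx G M rho lho br p v).1 (actIdx G M rho lho br p v).2 = lho (br p.1 p.2) v := by
  obtain ⟨s, u⟩ := p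
  have hsu := (br_eq_iff_rightCoset_eq hGM htau hact hinj hbr (s := s) (u := u)).mp rfl
  simp only [actIdx]
  set a := br s u
  set b := rho a v
  rw [br_eq_iff_rightCoset_eq hGM htau hact hinj hbr]
  calc (G : Set X) <• ((lho s b : X) * ((b⁻¹ * u * v : G) : X))
      = (G : Set X) <• ((s : X) * b * ((b⁻¹ * u * v : G) : X)) := by
        rw [op_smul_mul, ← rightCoset_eq_of_eq_coe_mul (hact s b), ← op_smul_mul]
    _ = (G : Set X) <• ((s : X) * u) <• (v : X) := by
        rw [← op_smul_mul]; push_cast; group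
    _ = (G : Set X) <• ((s : X) * a * v) := by rw [hsu, ← op_smul_mul]
    _ = (G : Set X) <• ((s : X) * b) <• (lho a v : X) := by
        rw [mul_assoc, hact a v, ← mul_assoc, op_smul_mul]
    _ = (G : Set X) <• ((lho s b : X) * (lho a v : X)) := by
        rw [rightCoset_eq_of_eq_coe_mul (hact s b), ← op_smul_mul]

include hL

theorem br_PIdx (p : M × G) :
    br (PIdx G M tau lho br L p).1 (PIdx G M tau lho br L p).2 = L (br p.1 p.2) := by
  obtain ⟨s, u⟩ := p
  have hsu := (br_eq_iff_rightCoset_eq hGM htau hact hinj hbr (s := s) (u := u)).mp rfl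
  have ht := coe_tau_of_mdot_eq_one htau (hL (br s u))
  simp only [PIdx]
  set a := br s u
  set t := tau (L a) a
  have hcoset : (G : Set X) <• (lho s (u * t⁻¹) : X)
      = (G : Set X) <• ((s : X) * u) <• (t : X)⁻¹ := by
    rw [← rightCoset_eq_of_eq_coe_mul (hact s _), ← op_smul_mul]; push_cast; group
  rw [br_eq_iff_rightCoset_eq hGM htau hact hinj hbr]
  calc (G : Set X) <• ((lho s (u * t⁻¹) : X) * ((t * u⁻¹ : G) : X))
      = (G : Set X) <• (s : X) := by
        rw [op_smul_mul, hcoset, ← op_smul_mul, ← op_smul_mul]; push_cast; group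
    _ = (G : Set X) <• ((s : X) * a) <• (t : X)⁻¹ <• (L a : X) := by
        rw [← op_smul_mul, ← op_smul_mul, ht]; group
    _ = (G : Set X) <• ((lho s (u * t⁻¹) : X) * (L a : X)) := by
        rw [← hsu, ← hcoset, ← op_smul_mul]

include hLL

theorem PIdx_actIdx_PIdx (s : M) (u : G) :
    PIdx G M tau lho br L (actIdx G M rho lho br (PIdx G M tau lho br L (s, u))
      (tau (br s u) (L (br s u)))) = (s, u) := by
  set a := br s u with ha
  set v := tau a (L a) with hv
  have hLa : (mdot a (L a) : X) = 1 := by simpa only [hLL a] using hL (L a)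
  obtain ⟨hrho, hlho⟩ := rho_tau_and_lho_tau_of_mdot_eq_one hGM htau hact (hL a) hLa
  have hbrP := br_PIdx hGM htau hact hinj hbr hL (s, u)
  have hP_act : actIdx G M rho lho br (PIdx G M tau lho br L (s, u)) v
      = (lho s u, u⁻¹ * v) := by
    rw [actIdx, hbrP, ← ha, hrho, PIdx, ← ha, lho_lho hGM hact]
    simp
  have hbr_act : br (lho s u) (u⁻¹ * v) = L a := by
    have h := br_actIdx hGM htau hact hinj hbr (PIdx G M tau lho br L (s, u)) v
    rwa [hbrP, ← ha, hlho, hP_act] at h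
  rw [hP_act, PIdx, hbr_act, hLL a, ← hv, lho_lho hGM hact]
  simp [lho_one hGM hact]

end

theorem statement6_general {k : Type*} [Semiring k] {X : Type*} [Group X]
    (G : Subgroup X) (M : Set X) (hGM : Subgroup.IsComplement (G : Set X) M)
    (tau : M → M → G) (mdot : M → M → M)
    (htau : ∀ s t : M, (s : X) * (t : X) = (tau s t : X) * (mdot s t : X))
    (rho : M → G → G) (lho : M → G → M)
    (hact : ∀ (s : M) (u : G), (s : X) * (u : X) = (rho s u : X) * (lho s u : X))
    (hinj : ∀ s : M, Function.Injective (mdot s))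
    (br : M → G → M) (hbr : ∀ (s : M) (u : G), mdot s (br s u) = lho s u)
    (L : M → M) (hL : ∀ s : M, (mdot (L s) s : X) = 1) (hLL : Function.Involutive L)
    (s : M) (u : G) :
    Finsupp.lmapDomain k k (PIdx G M tau lho br L)
        (Finsupp.lmapDomain k k
          (fun p => actIdx G M rho lho br p (tau (br s u) (L (br s u))))
          (Finsupp.lmapDomain k k (PIdx G M tau lho br L) (Finsupp.single (s, u) (1 : k))))
      = Finsupp.single (s, u) (1 : k) := by
  simp only [Finsupp.lmapDomain_apply, Finsupp.mapDomain_single,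
    PIdx_actIdx_PIdx hGM htau hact hinj hbr hL hLL]

/-- For every basis element δ_s ⊗ u of A one has
P(P(δ_s ⊗ u)◁τ(a, a^L)) = δ_s ⊗ u, where a = ⟨δ_s ⊗ u⟩. -/
theorem statement6 {k : Type*} [Field k] {X : Type*} [Group X] [Fintype X]
    [DecidableEq X]
    (G : Subgroup X) (M : Set X)
    (hM1 : (1 : X) ∈ M)
    (hfac : ∀ x : X, ∃! p : ↥G × ↥M, x = (p.1 : X) * (p.2 : X))
    (tau : ↥M → ↥M → ↥G) (mdot : ↥M → ↥M → ↥M)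
    (htau : ∀ s t : ↥M, (s : X) * (t : X) = (tau s t : X) * (mdot s t : X))
    (rho : ↥M → ↥G → ↥G) (lho : ↥M → ↥G → ↥M)
    (hact : ∀ (s : ↥M) (u : ↥G), (s : X) * (u : X) = (rho s u : X) * (lho s u : X))
    (hbij : ∀ s : ↥M, Function.Bijective (mdot s))
    (br : ↥M → ↥G → ↥M)
    (hbr : ∀ (s : ↥M) (u : ↥G), mdot s (br s u) = lho s u)
    (L : ↥M → ↥M)
    (hL : ∀ s : ↥M, (mdot (L s) s : X) = 1)
    (hLuniq : ∀ s t : ↥M, (mdot t s : X) = 1 → t = L s)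
    (hLL : ∀ s : ↥M, L (L s) = s) :
    ∀ (s : ↥M) (u : ↥G),
      Finsupp.lmapDomain k k (PIdx G M tau lho br L)
          (Finsupp.lmapDomain k k
            (fun p => actIdx G M rho lho br p (tau (br s u) (L (br s u))))
            (Finsupp.lmapDomain k k (PIdx G M tau lho br L)
              (Finsupp.single (s, u) (1 : k))))
        = Finsupp.single (s, u) (1 : k) := by
  have hGM : Subgroup.IsComplement (G : Set X) M :=
    Subgroup.isComplement_iff_existsUnique.mpr fun x => by
      simpa only [eq_comm (a := x)] using! hfac x
  exact statement6_general G M hGM tau mdot htau rho lho hact (fun s => (hbij s).1) br hbr L hL hLL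
end

section
/- Suppose every s ∈ M has a unique left inverse s^L and s^{LL} = s for all s ∈ M. Then for every s ∈ M: (i) s·s^L = e, so s^L is also a right inverse of s (s^L = s^R), and (ii) s^L◁τ(s, s^L) = s^L. -/
/-!
Since `s = s^{LL}`, part (i) is the equation `t^L · t = e` at `t = s^L`. Consequently both
`s s^L = τ(s, s^L)` and `s^L s = τ(s^L, s)` lie in `G`, so reassociating `s^L s s^L` gives
`s^L τ(s, s^L) = τ(s^L, s) s^L`. Both `(s^L ▷ τ(s, s^L), s^L ◁ τ(s, s^L))` and
`(τ(s^L, s), s^L)` are thus factorizations of this element, and uniqueness yields (ii).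
-/

theorem right_inv_of_involutive_left_inv {α β : Type*} {op : α → α → β} {e : β} {L : α → α}
    (hL : ∀ s, op (L s) s = e) (hLL : Function.Involutive L) (s : α) : op s (L s) = e := by
  simpa only [hLL s] using hL (L s)

theorem semiconjBy_mul_mul_swap {S : Type*} [Semigroup S] (a b : S) :
    SemiconjBy b (a * b) (b * a) :=
  (mul_assoc b a b).symm

section Factorization

variable {X : Type*} {G M : Set X}

theorem right_factor_eq_of_mul_eq_mul [Mul X]
    (hinj : Function.Injective fun p : G × M => (p.1 : X) * (p.2 : X))
    {u v : G} {s t : M} (h : (u : X) * s = v * t) : s = t :=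
  congrArg Prod.snd (@hinj (u, s) (v, t) h)

variable [Monoid X] {tau : M → M → G} {mdot : M → M → M}

theorem mul_eq_tau_of_mdot_eq_one
    (htau : ∀ s t : M, (s : X) * (t : X) = (tau s t : X) * (mdot s t : X))
    {s t : M} (hst : (mdot s t : X) = 1) : (s : X) * t = tau s t := by
  rw [htau, hst, mul_one]

theorem semiconjBy_tau_tau_of_mdot_eq_one
    (htau : ∀ s t : M, (s : X) * (t : X) = (tau s t : X) * (mdot s t : X))
    {s t : M} (hst : (mdot s t : X) = 1) (hts : (mdot t s : X) = 1) :
    SemiconjBy (t : X) (tau s t) (tau t s) := by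
  simpa only [mul_eq_tau_of_mdot_eq_one htau hst, mul_eq_tau_of_mdot_eq_one htau hts]
    using semiconjBy_mul_mul_swap (s : X) (t : X)

theorem lho_tau_eq_of_mdot_eq_one
    (hinj : Function.Injective fun p : G × M => (p.1 : X) * (p.2 : X))
    (htau : ∀ s t : M, (s : X) * (t : X) = (tau s t : X) * (mdot s t : X))
    {rho : M → G → G} {lho : M → G → M}
    (hact : ∀ (s : M) (u : G), (s : X) * (u : X) = (rho s u : X) * (lho s u : X))
    {s t : M} (hst : (mdot s t : X) = 1) (hts : (mdot t s : X) = 1) :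
    lho t (tau s t) = t := by
  have hconj : (t : X) * tau s t = tau t s * t := semiconjBy_tau_tau_of_mdot_eq_one htau hst hts
  exact right_factor_eq_of_mul_eq_mul hinj ((hact t (tau s t)).symm.trans hconj)

end Factorization

theorem statement7_general {X : Type*} [Monoid X] {G M : Set X}
    (hinj : Function.Injective fun p : G × M => (p.1 : X) * (p.2 : X))
    {tau : M → M → G} {mdot : M → M → M}
    (htau : ∀ s t : M, (s : X) * (t : X) = (tau s t : X) * (mdot s t : X))
    {rho : M → G → G} {lho : M → G → M}
    (hact : ∀ (s : M) (u : G), (s : X) * (u : X) = (rho s u : X) * (lho s u : X))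
    {L : M → M} (hL : ∀ s : M, (mdot (L s) s : X) = 1) (hLL : Function.Involutive L) (s : M) :
    (mdot s (L s) : X) = 1 ∧ lho (L s) (tau s (L s)) = L s := by
  have hright : (mdot s (L s) : X) = 1 :=
    right_inv_of_involutive_left_inv (op := fun s t => (mdot s t : X)) hL hLL s
  exact ⟨hright, lho_tau_eq_of_mdot_eq_one hinj htau hact hright (hL s)⟩

/-- In the coset-representative setting (X a finite group, G ≤ X,
M ⊆ X with 1 ∈ M and unique factorization X = G·M, with τ, ·, ▷, ◁ defined by
unique factorization), if every s ∈ M has a unique left inverse s^L (meaning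
s^L·s = e, and t·s = e implies t = s^L) and s^{LL} = s for all s, then for every
s ∈ M: (i) s·s^L = e (so s^L is also a right inverse of s), and
(ii) s^L◁τ(s, s^L) = s^L. -/
theorem statement7 {X : Type*} [Group X] [Fintype X]
    (G : Subgroup X) (M : Set X)
    (hM1 : (1 : X) ∈ M)
    (hfac : ∀ x : X, ∃! p : ↥G × ↥M, x = (p.1 : X) * (p.2 : X))
    (tau : ↥M → ↥M → ↥G) (mdot : ↥M → ↥M → ↥M)
    (htau : ∀ s t : ↥M, (s : X) * (t : X) = (tau s t : X) * (mdot s t : X))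
    (rho : ↥M → ↥G → ↥G) (lho : ↥M → ↥G → ↥M)
    (hact : ∀ (s : ↥M) (u : ↥G), (s : X) * (u : X) = (rho s u : X) * (lho s u : X))
    (L : ↥M → ↥M)
    (hL : ∀ s : ↥M, (mdot (L s) s : X) = 1)
    (hLuniq : ∀ s t : ↥M, (mdot t s : X) = 1 → t = L s)
    (hLL : ∀ s : ↥M, L (L s) = s) :
    ∀ s : ↥M, (mdot s (L s) : X) = 1 ∧ lho (L s) (tau s (L s)) = L s := by
  have hcompl : Subgroup.IsComplement (G : Set X) M :=
    Subgroup.isComplement_iff_existsUnique.mpr fun x =>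
      (existsUnique_congr fun _ => eq_comm).mp (hfac x)
  exact statement7_general hcompl.injective htau hact hL hLL
end

section
/- Suppose every s ∈ M has a unique left inverse s^L and s^{LL} = s for all s ∈ M. Then for every a ∈ M one has a^L▷τ(a, a^L) = τ(a^L, a). -/
/-!
If `s·t = t·s = e`, then `s t = τ(s, t)` and `t s = τ(t, s)` in `X`, so associativity
`t (s t) = (t s) t` reads `t τ(s, t) = τ(t, s) t`. By uniqueness of factorizations, the right-hand
side is the factorization `(t▷τ(s, t)) (t◁τ(s, t))` of the left-hand side. The involutivity of the
left inverse makes `a` and `a^L` such a pair.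
-/

section Factorization

variable {X : Type*} [Monoid X] {U M : Set X}
  {tau : M → M → U} {mdot : M → M → M} {rho : M → U → U} {lho : M → U → M}

theorem mul_eq_coe_tau_of_mdot_eq_one
    (htau : ∀ s t : M, (s : X) * (t : X) = (tau s t : X) * (mdot s t : X))
    {s t : M} (h : (mdot s t : X) = 1) : (s : X) * (t : X) = (tau s t : X) := by
  rw [htau, h, mul_one]

theorem rho_eq_and_lho_eq_of_mul_eq_mul
    (hinj : Function.Injective fun p : U × M => (p.1 : X) * (p.2 : X))
    (hact : ∀ (s : M) (u : U), (s : X) * (u : X) = (rho s u : X) * (lho s u : X))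
    {s t : M} {u v : U} (h : (s : X) * (u : X) = (v : X) * (t : X)) :
    rho s u = v ∧ lho s u = t :=
  Prod.mk_inj.mp (hinj ((hact s u).symm.trans h))

theorem statement8_general
    (hinj : Function.Injective fun p : U × M => (p.1 : X) * (p.2 : X))
    (htau : ∀ s t : M, (s : X) * (t : X) = (tau s t : X) * (mdot s t : X))
    (hact : ∀ (s : M) (u : U), (s : X) * (u : X) = (rho s u : X) * (lho s u : X))
    {s t : M} (hst : (mdot s t : X) = 1) (hts : (mdot t s : X) = 1) :
    rho t (tau s t) = tau t s ∧ lho t (tau s t) = t :=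
  rho_eq_and_lho_eq_of_mul_eq_mul hinj hact <| calc
    (t : X) * (tau s t : X)
    _ = (t : X) * ((s : X) * (t : X)) := by rw [mul_eq_coe_tau_of_mdot_eq_one htau hst]
    _ = (t : X) * (s : X) * (t : X) := (mul_assoc _ _ _).symm
    _ = (tau t s : X) * (t : X) := by rw [mul_eq_coe_tau_of_mdot_eq_one htau hts]

end Factorization

/-- If every s ∈ M has a unique left inverse s^L and s^{LL} = s
for all s ∈ M, then for every a ∈ M one has a^L▷τ(a, a^L) = τ(a^L, a). -/
theorem statement8 {X : Type*} [Group X] [Fintype X]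
    (G : Subgroup X) (M : Set X)
    (hM1 : (1 : X) ∈ M)
    (hfac : ∀ x : X, ∃! p : ↥G × ↥M, x = (p.1 : X) * (p.2 : X))
    (tau : ↥M → ↥M → ↥G) (mdot : ↥M → ↥M → ↥M)
    (htau : ∀ s t : ↥M, (s : X) * (t : X) = (tau s t : X) * (mdot s t : X))
    (rho : ↥M → ↥G → ↥G) (lho : ↥M → ↥G → ↥M)
    (hact : ∀ (s : ↥M) (u : ↥G), (s : X) * (u : X) = (rho s u : X) * (lho s u : X))
    (L : ↥M → ↥M)
    (hL : ∀ s : ↥M, (mdot (L s) s : X) = 1)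
    (hLuniq : ∀ s t : ↥M, (mdot t s : X) = 1 → t = L s)
    (hLL : ∀ s : ↥M, L (L s) = s) :
    ∀ a : ↥M, rho (L a) (tau a (L a)) = tau (L a) a :=
  fun a ↦ (statement8_general (U := (G : Set X)) (fun _ _ h ↦ (hfac _).unique rfl h) htau hact
    (by simpa only [hLL] using hL (L a)) (hL a)).1
end

section
/- Assume every s ∈ M has a unique left inverse s^L and a unique right inverse s^R, and that (s^L)^R = s for all s ∈ M. For an object V of 𝒞, define the bar object V̄ = V with grading ⟨ξ̄⟩ = ⟨ξ⟩^R and G-action ξ̄◁u = ξ◁(⟨ξ⟩^R▷u). Then the grading and the G-action of V̄ are consistent: ⟨ξ̄◁u⟩ = ⟨ξ̄⟩◁u for all homogeneous ξ and u ∈ G; equivalently, (s◁(s^R▷u))^R = s^R◁u for all s ∈ M, u ∈ G. -/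
/-!
The product `s · t` is `1` exactly when `s t ∈ G`, because `G ∩ M = {1}`; so being a right inverse
is a statement about `G`-cosets. Put `t = s^R`, `v = t ▷ u`, `a = s ◁ v` and `b = t ◁ u`. Then
`(s ▷ v) a b = s v b = s t u ∈ G`, hence `a b ∈ G`, which says that `b` is the right inverse of `a`.
-/

section Factorization

variable {X : Type*} [Group X] {G : Subgroup X} {M : Set X}

theorem eq_one_of_isComplement {S T : Set X} (hST : Subgroup.IsComplement S T)
    (h1S : (1 : X) ∈ S) (h1T : (1 : X) ∈ T) {x : X} (hxS : x ∈ S) (hxT : x ∈ T) : x = 1 :=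
  calc x = (hST.equiv x).2 := ((hST.equiv_snd_eq_self_iff_mem h1S).mpr hxT).symm
    _ = 1 := (hST.coe_equiv_snd_eq_one_iff_mem h1T).mpr hxS

theorem isComplement_of_existsUnique_factorization
    (hfac : ∀ x : X, ∃! p : G × M, x = p.1 * p.2) : Subgroup.IsComplement (G : Set X) M :=
  Subgroup.isComplement_iff_existsUnique.mpr fun x =>
    (existsUnique_congr fun _ => eq_comm).mp (hfac x)

theorem mul_mem_iff_right_eq_one (hGM : ∀ x ∈ M, x ∈ G → x = 1) {g m : X}
    (hg : g ∈ G) (hm : m ∈ M) : g * m ∈ G ↔ m = 1 := by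
  rw [G.mul_mem_cancel_left hg]
  exact ⟨hGM m hm, fun h => h ▸ G.one_mem⟩

theorem mul_mem_of_factorizations {s t u v w a b : X} (hst : s * t ∈ G) (hu : u ∈ G) (hw : w ∈ G)
    (htu : t * u = v * b) (hsv : s * v = w * a) : a * b ∈ G := by
  have regroup : w * (a * b) = s * t * u := by
    rw [← mul_assoc, ← hsv, mul_assoc, ← htu, mul_assoc]
  rw [← G.mul_mem_cancel_left hw, regroup]
  exact G.mul_mem hst hu

theorem statement9_general (hGM : ∀ x ∈ M, x ∈ G → x = 1)
    {tau : M → M → G} {mdot : M → M → M} (htau : ∀ s t : M, (s * t : X) = tau s t * mdot s t)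
    {rho : M → G → G} {lho : M → G → M} (hact : ∀ (s : M) (u : G), (s * u : X) = rho s u * lho s u)
    {R : M → M} (hR : ∀ s : M, (mdot s (R s) : X) = 1)
    (hRuniq : ∀ s t : M, (mdot s t : X) = 1 → t = R s) (s : M) (u : G) :
    R (lho s (rho (R s) u)) = lho (R s) u := by
  have mdot_eq_one_iff (s t : M) : (mdot s t : X) = 1 ↔ (s * t : X) ∈ G := by
    rw [htau, mul_mem_iff_right_eq_one hGM (tau s t).2 (mdot s t).2]
  have mul_right_inv_mem : (s * R s : X) ∈ G := (mdot_eq_one_iff s (R s)).mp (hR s)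
  have acted_mul_mem : (lho s (rho (R s) u) * lho (R s) u : X) ∈ G :=
    mul_mem_of_factorizations mul_right_inv_mem u.2 (rho s (rho (R s) u)).2
      (hact (R s) u) (hact s (rho (R s) u))
  exact (hRuniq _ _ ((mdot_eq_one_iff _ _).mpr acted_mul_mem)).symm

end Factorization

/-- Assume every s ∈ M has a unique left inverse s^L and a
unique right inverse s^R, and that (s^L)^R = s for all s ∈ M. For an object V
of 𝒞 the bar object V̄ = V with grading ⟨ξ̄⟩ = ⟨ξ⟩^R and G-action
ξ̄◁u = ξ◁(⟨ξ⟩^R▷u) has consistent grading and action: ⟨ξ̄◁u⟩ = ⟨ξ̄⟩◁u;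
equivalently, (s◁(s^R▷u))^R = s^R◁u for all s ∈ M, u ∈ G. -/
theorem statement9 {X : Type*} [Group X] [Fintype X]
    (G : Subgroup X) (M : Set X)
    (hM1 : (1 : X) ∈ M)
    (hfac : ∀ x : X, ∃! p : ↥G × ↥M, x = (p.1 : X) * (p.2 : X))
    (tau : ↥M → ↥M → ↥G) (mdot : ↥M → ↥M → ↥M)
    (htau : ∀ s t : ↥M, (s : X) * (t : X) = (tau s t : X) * (mdot s t : X))
    (rho : ↥M → ↥G → ↥G) (lho : ↥M → ↥G → ↥M)
    (hact : ∀ (s : ↥M) (u : ↥G), (s : X) * (u : X) = (rho s u : X) * (lho s u : X))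
    (L : ↥M → ↥M)
    (hL : ∀ s : ↥M, (mdot (L s) s : X) = 1)
    (hLuniq : ∀ s t : ↥M, (mdot t s : X) = 1 → t = L s)
    (R : ↥M → ↥M)
    (hR : ∀ s : ↥M, (mdot s (R s) : X) = 1)
    (hRuniq : ∀ s t : ↥M, (mdot s t : X) = 1 → t = R s)
    (hLR : ∀ s : ↥M, R (L s) = s) :
    ∀ (s : ↥M) (u : ↥G), R (lho s (rho (R s) u)) = lho (R s) u := by
  have hGM := isComplement_of_existsUnique_factorization hfac
  exact statement9_general (fun _ hxM hxG => eq_one_of_isComplement hGM G.one_mem hM1 hxG hxM)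
    htau hact hR hRuniq
end

section
/- Assume every s ∈ M has a unique right inverse s^R. For an object V of 𝒞, let V̿ denote the double-bar object: V̿ = V with grading ⟨ξ̿⟩ = ⟨ξ⟩^{RR} and G-action ξ̿◁u = ξ◁(⟨ξ⟩^R▷(⟨ξ⟩^{RR}▷u)). Then the map Ω_V : V̿ → V given by Ω_V(ξ̿) = ξ◁τ(⟨ξ⟩^R, ⟨ξ⟩^{RR}) is a type A morphism, and it is natural: for every type A morphism φ : V → W one has φ ∘ Ω_V = Ω_W ∘ φ̿, where φ̿ : V̿ → W̿ equals φ as a linear map. -/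
/-!
Write `δ s = s s^R = τ(s, s^R) ∈ G`. Then `s δ(s^R) = s s^R s^{RR} = δ(s) s^{RR}`, so uniqueness
of factorizations gives `s ◁ δ(s^R) = s^{RR}`. Factorizing `s s^R u` from right to left shows that
`s^R ◁ u` is the right inverse of `s ◁ (s^R ▷ u)`, and that
`(s ▷ (s^R ▷ u)) δ(s ◁ (s^R ▷ u)) = δ(s) u`. The second identity, taken at `s^R` and rewritten with
the first, is the equivariance of `ξ ↦ ξ ◁ δ(⟨ξ⟩^R)`.
-/

section Factorization

variable {X : Type*} [Group X] {G : Subgroup X} {M : Set X}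
  {tau : M → M → G} {mdot : M → M → M} {rho : M → G → G} {lho : M → G → M}

theorem mul_mul_eq_rho_mul_lho_mul_lho
    (hact : ∀ (s : M) (u : G), (s : X) * u = rho s u * lho s u) (s t : M) (u : G) :
    (s : X) * t * u = rho s (rho t u) * (lho s (rho t u) * lho t u) := by
  rw [mul_assoc, hact, ← mul_assoc, hact, mul_assoc]

/-- `R` is the right inversion `s ↦ s^R` of `M`, expressed in `X` alone: where factorizations
are unique and `1 ∈ M`, the condition `s · t = e` says that `s t ∈ G`. -/
def IsRightInversion (G : Subgroup X) {M : Set X} (R : M → M) : Prop :=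
  ∀ s t : M, (s : X) * t ∈ G ↔ t = R s

variable {R : M → M}

theorem isRightInversion_of_mdot_eq_one
    (hinj : Function.Injective fun p : G × M => (p.1 : X) * p.2)
    (htau : ∀ s t : M, (s : X) * t = tau s t * mdot s t)
    (hone : ∀ s : M, (mdot s (R s) : X) = 1)
    (huniq : ∀ s t : M, (mdot s t : X) = 1 → t = R s) :
    IsRightInversion G R := by
  refine fun s t => ⟨fun hst => huniq s t ?_, ?_⟩
  · have hfactor : (tau s t : X) * mdot s t = (⟨s * t, hst⟩ : G) * mdot s (R s) := by
      rw [← htau, hone, mul_one]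
    have hmdot : mdot s t = mdot s (R s) :=
      congrArg Prod.snd (hinj (a₁ := (_, _)) (a₂ := (_, _)) hfactor)
    rw [hmdot, hone]
  · rintro rfl
    rw [htau, hone, mul_one]
    exact (tau s (R s)).2

namespace IsRightInversion

/-- The element `s s^R = τ(s, s^R)` of `G`. -/
def defect (hR : IsRightInversion G R) (s : M) : G :=
  ⟨s * R s, (hR s (R s)).2 rfl⟩

theorem coe_defect (hR : IsRightInversion G R) (s : M) : (hR.defect s : X) = s * R s :=
  rfl

theorem tau_eq_defect (hR : IsRightInversion G R)
    (htau : ∀ s t : M, (s : X) * t = tau s t * mdot s t)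
    (hone : ∀ s : M, (mdot s (R s) : X) = 1) (s : M) :
    tau s (R s) = hR.defect s :=
  Subtype.ext <| by rw [coe_defect, htau, hone, mul_one]

theorem lho_defect (hR : IsRightInversion G R)
    (hinj : Function.Injective fun p : G × M => (p.1 : X) * p.2)
    (hact : ∀ (s : M) (u : G), (s : X) * u = rho s u * lho s u) (s : M) :
    lho s (hR.defect (R s)) = R (R s) := by
  have hfactor : (rho s (hR.defect (R s)) : X) * lho s (hR.defect (R s)) =
      hR.defect s * R (R s) := by
    rw [← hact, coe_defect, coe_defect, mul_assoc]
  exact congrArg Prod.snd (hinj (a₁ := (_, _)) (a₂ := (_, _)) hfactor)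

theorem apply_lho_rho (hR : IsRightInversion G R)
    (hact : ∀ (s : M) (u : G), (s : X) * u = rho s u * lho s u) (s : M) (u : G) :
    R (lho s (rho (R s) u)) = lho (R s) u := by
  have hmem : (rho s (rho (R s) u) : X) * (lho s (rho (R s) u) * lho (R s) u) ∈ G := by
    rw [← mul_mul_eq_rho_mul_lho_mul_lho hact, ← hR.coe_defect]
    exact mul_mem (hR.defect s).2 u.2
  exact ((hR _ _).1 ((G.mul_mem_cancel_left (rho s (rho (R s) u)).2).1 hmem)).symm

theorem rho_rho_mul_defect (hR : IsRightInversion G R)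
    (hact : ∀ (s : M) (u : G), (s : X) * u = rho s u * lho s u) (s : M) (u : G) :
    rho s (rho (R s) u) * hR.defect (lho s (rho (R s) u)) = hR.defect s * u :=
  Subtype.ext <| by
    simp only [Subgroup.coe_mul, coe_defect, hR.apply_lho_rho hact,
      mul_mul_eq_rho_mul_lho_mul_lho hact]

end IsRightInversion

end Factorization

theorem statement10_general {k : Type*} [Field k] {X : Type*} [Group X] [DecidableEq X]
    (G : Subgroup X) (M : Set X)
    (hinj : Function.Injective fun p : ↥G × ↥M => (p.1 : X) * (p.2 : X))
    (tau : ↥M → ↥M → ↥G) (mdot : ↥M → ↥M → ↥M)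
    (htau : ∀ s t : ↥M, (s : X) * (t : X) = (tau s t : X) * (mdot s t : X))
    (rho : ↥M → ↥G → ↥G) (lho : ↥M → ↥G → ↥M)
    (hact : ∀ (s : ↥M) (u : ↥G), (s : X) * (u : X) = (rho s u : X) * (lho s u : X))
    (R : ↥M → ↥M)
    (hR : ∀ s : ↥M, (mdot s (R s) : X) = 1)
    (hRuniq : ∀ s t : ↥M, (mdot s t : X) = 1 → t = R s)
    (V W : CObj k G M lho) :
    (∀ (s : ↥M) (ξ : V.V), ξ ∈ V.grade s →
      (V.act (tau (R s) (R (R s))) ξ ∈ V.grade (R (R s))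
      ∧ ∀ u : ↥G,
          V.act (tau (R (lho s (rho (R s) (rho (R (R s)) u))))
              (R (R (lho s (rho (R s) (rho (R (R s)) u))))))
            (V.act (rho (R s) (rho (R (R s)) u)) ξ)
          = V.act u (V.act (tau (R s) (R (R s))) ξ)))
    ∧ ∀ (φ : V.V →ₗ[k] W.V), IsTypeA V W φ →
        ∀ (s : ↥M) (ξ : V.V), ξ ∈ V.grade s →
          φ (V.act (tau (R s) (R (R s))) ξ)
            = W.act (tau (R s) (R (R s))) (φ ξ) := by
  have hinv : IsRightInversion G R := isRightInversion_of_mdot_eq_one hinj htau hR hRuniq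
  simp only [hinv.tau_eq_defect htau hR]
  refine ⟨fun s ξ hξ => ⟨?_, fun u => ?_⟩, fun φ hφ s ξ hξ => (hφ s ξ hξ).2 _⟩
  · have hgrade := V.act_grade s (hinv.defect (R s)) ξ hξ
    rwa [hinv.lho_defect hinj hact] at hgrade
  · rw [V.act_mul, V.act_mul, hinv.apply_lho_rho hact, hinv.rho_rho_mul_defect hact]

/-- Assume every s ∈ M has a unique right inverse s^R. For an
object V of 𝒞 let V̿ be the double-bar object (V̿ = V with grading
⟨ξ̿⟩ = ⟨ξ⟩^{RR} and G-action ξ̿◁u = ξ◁(⟨ξ⟩^R▷(⟨ξ⟩^{RR}▷u))). Then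
Ω_V : V̿ → V, Ω_V(ξ̿) = ξ◁τ(⟨ξ⟩^R, ⟨ξ⟩^{RR}), is a type A morphism:
its value on a homogeneous ξ of grade s lies in grade s^{RR} = ⟨ξ̿⟩, and it
intertwines the double-bar G-action with the G-action of V; moreover it is
natural: φ ∘ Ω_V = Ω_W ∘ φ̿ for every type A morphism φ : V → W. -/
theorem statement10 {k : Type*} [Field k] {X : Type*} [Group X] [Fintype X]
    [DecidableEq X]
    (G : Subgroup X) (M : Set X)
    (hM1 : (1 : X) ∈ M)
    (hfac : ∀ x : X, ∃! p : ↥G × ↥M, x = (p.1 : X) * (p.2 : X))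
    (tau : ↥M → ↥M → ↥G) (mdot : ↥M → ↥M → ↥M)
    (htau : ∀ s t : ↥M, (s : X) * (t : X) = (tau s t : X) * (mdot s t : X))
    (rho : ↥M → ↥G → ↥G) (lho : ↥M → ↥G → ↥M)
    (hact : ∀ (s : ↥M) (u : ↥G), (s : X) * (u : X) = (rho s u : X) * (lho s u : X))
    (R : ↥M → ↥M)
    (hR : ∀ s : ↥M, (mdot s (R s) : X) = 1)
    (hRuniq : ∀ s t : ↥M, (mdot s t : X) = 1 → t = R s)
    (V W : CObj k G M lho) :
    -- Ω_V is a type A morphism V̿ → V :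
    (∀ (s : ↥M) (ξ : V.V), ξ ∈ V.grade s →
      -- grade condition: ⟨Ω_V(ξ̿)⟩ = s^{RR} = ⟨ξ̿⟩
      (V.act (tau (R s) (R (R s))) ξ ∈ V.grade (R (R s))
      -- action condition: Ω_V(ξ̿◁u) = Ω_V(ξ̿)◁u
      ∧ ∀ u : ↥G,
          V.act (tau (R (lho s (rho (R s) (rho (R (R s)) u))))
              (R (R (lho s (rho (R s) (rho (R (R s)) u))))))
            (V.act (rho (R s) (rho (R (R s)) u)) ξ)
          = V.act u (V.act (tau (R s) (R (R s))) ξ)))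
    -- naturality: φ ∘ Ω_V = Ω_W ∘ φ̿ for every type A morphism φ : V → W
    ∧ ∀ (φ : V.V →ₗ[k] W.V), IsTypeA V W φ →
        ∀ (s : ↥M) (ξ : V.V), ξ ∈ V.grade s →
          φ (V.act (tau (R s) (R (R s))) ξ)
            = W.act (tau (R s) (R (R s))) (φ ξ) := by
  exact statement10_general G M (fun p q h => (hfac _).unique rfl h) tau mdot htau rho lho hact
    R hR hRuniq V W
end
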